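/- Let N ≥ 1, let a > 2 be a real number, and let ρ, ρ' ∈ ℝ^N with ρ_i, ρ'_i ∈ [−a/2, a/2] for all i ∈ {1,…,N}. If r(ρ) < r(ρ'), then R(ρ) > R(ρ'). (That is, the reward function R is rank-preserving: strictly higher-ranked robustness vectors receive strictly higher reward.) -/

import Mathlib

open Finset

/-- The step function: 0 on negative reals, 1 otherwise (real-valued). -/
noncomputable def stp (x : ℝ) : ℝ := if x < 0 then 0 else 1

/-- The step function with natural-number values. -/
noncomputable def stepNat (x : ℝ) : ℕ := if x < 0 then 0 else 1

/-- The rank of a robustness vector `ρ ∈ ℝ^N`: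
`r(ρ) = 2^N - ∑_{i=1}^N 2^{N-i} step(ρ_i)` (index `i : Fin N` encodes rule `i+1`). -/
noncomputable def rnk {N : ℕ} (ρ : Fin N → ℝ) : ℕ :=
  2 ^ N - ∑ i : Fin N, 2 ^ (N - 1 - (i : ℕ)) * stepNat (ρ i)

/-- The reward `R(ρ) = ∑_{i=1}^N ( a^{N-i+1} step(ρ_i) + ρ_i / N )`
(index `i : Fin N` encodes rule `i+1`, so the exponent is `N - i`). -/
noncomputable def rwd {N : ℕ} (a : ℝ) (ρ : Fin N → ℝ) : ℝ :=
  ∑ i : Fin N, (a ^ (N - (i : ℕ)) * stp (ρ i) + ρ i / N)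

/-!
The satisfied rules of a robustness vector are the ones of a binary expansion, so a smaller rank
means a larger set of satisfied rules in the colexicographic order: the most important rule on
which the two vectors disagree is satisfied by the better one. For `2 ≤ a`, the geometric estimate
`1 + a + ⋯ + a ^ (m - 1) ≤ a ^ m - 1` turns this comparison into a gap of at least `a` between the
step parts of the rewards. The mean robustness of the worse vector cannot make up for that gap: it
exceeds the mean of the better one by less than `a`, because on some rule the worse value is
negative and the better one is not.
-/

/-- The exponents `N - 1 - i` carried by the satisfied rules `i` (those with `0 ≤ ρ i`) in the rank
of `ρ`: the positions of the ones in the binary expansion of `2 ^ N - rnk ρ`. They form a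
`Finset ℕ`, so that ranks are compared in Mathlib's colexicographic order. -/
noncomputable def satisfiedExponents {N : ℕ} (ρ : Fin N → ℝ) : Finset ℕ :=
  ({i | 0 ≤ ρ i} : Finset (Fin N)).map (Fin.revPerm.toEmbedding.trans Fin.valEmbedding)

section GeometricSum

variable {R : Type*} [Semiring R] [PartialOrder R] [IsOrderedRing R] {b : R}

theorem geomSum_add_one_le_pow (hb : 2 ≤ b) (m : ℕ) : ∑ k ∈ range m, b ^ k + 1 ≤ b ^ m := by
  induction m with
  | zero => simp
  | succ m ih =>
    have hpow : 0 ≤ b ^ m := pow_nonneg (zero_le_two.trans hb) m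
    calc ∑ k ∈ range (m + 1), b ^ k + 1
        = (∑ k ∈ range m, b ^ k + 1) + b ^ m := by rw [sum_range_succ, add_right_comm]
      _ ≤ b ^ m + b ^ m := by gcongr
      _ = b ^ m * 2 := (mul_two _).symm
      _ ≤ b ^ m * b := by gcongr
      _ = b ^ (m + 1) := (pow_succ b m).symm

theorem sum_pow_add_one_le_sum_pow_of_toColex_lt (hb : 2 ≤ b) {s t : Finset ℕ}
    (hst : toColex s < toColex t) : ∑ k ∈ s, b ^ k + 1 ≤ ∑ k ∈ t, b ^ k := by
  obtain ⟨m, hmt, hms, hlt⟩ := Colex.toColex_lt_toColex_iff_exists_forall_lt.1 hst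
  have hpow (k : ℕ) : 0 ≤ b ^ k := pow_nonneg (zero_le_two.trans hb) k
  have hsub : s \ t ⊆ range m := fun k hk ↦
    mem_range.2 (hlt k (mem_sdiff.1 hk).1 (mem_sdiff.1 hk).2)
  have hdiff : ∑ k ∈ s \ t, b ^ k + 1 ≤ ∑ k ∈ t \ s, b ^ k :=
    calc ∑ k ∈ s \ t, b ^ k + 1
        ≤ ∑ k ∈ range m, b ^ k + 1 := by
          exact add_le_add_left
            (sum_le_sum_of_subset_of_nonneg hsub fun k _ _ ↦ hpow k) 1
      _ ≤ b ^ m := geomSum_add_one_le_pow hb m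
      _ ≤ ∑ k ∈ t \ s, b ^ k :=
          single_le_sum (f := fun k ↦ b ^ k) (fun k _ ↦ hpow k) (mem_sdiff.2 ⟨hmt, hms⟩)
  calc ∑ k ∈ s, b ^ k + 1
      = ∑ k ∈ s ∩ t, b ^ k + (∑ k ∈ s \ t, b ^ k + 1) := by
        rw [← add_assoc, sum_inter_add_sum_sdiff]
    _ ≤ ∑ k ∈ t ∩ s, b ^ k + ∑ k ∈ t \ s, b ^ k := by
        rw [inter_comm]
        gcongr
    _ = ∑ k ∈ t, b ^ k := sum_inter_add_sum_sdiff t s _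

end GeometricSum

section Reward

variable {N : ℕ} {ρ ρ' : Fin N → ℝ}

theorem sum_satisfiedExponents {M : Type*} [AddCommMonoid M] (ρ : Fin N → ℝ) (f : ℕ → M) :
    ∑ k ∈ satisfiedExponents ρ, f k = ∑ i, if ρ i < 0 then 0 else f i.rev := by
  simp_rw [← ite_not (p := ρ _ < 0), not_lt]
  simp [satisfiedExponents, sum_filter]

theorem rnk_eq_two_pow_sub_sum (ρ : Fin N → ℝ) :
    rnk ρ = 2 ^ N - ∑ k ∈ satisfiedExponents ρ, 2 ^ k := by
  have hexp (i : Fin N) : N - 1 - (i : ℕ) = i.rev := by rw [Fin.val_rev]; omega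
  simp only [rnk, stepNat, sum_satisfiedExponents, hexp, mul_ite, mul_zero, mul_one]

theorem rwd_eq_mul_sum_add (a : ℝ) (ρ : Fin N → ℝ) :
    rwd a ρ = a * ∑ k ∈ satisfiedExponents ρ, a ^ k + (∑ i, ρ i) / N := by
  have hexp (i : Fin N) : N - (i : ℕ) = i.rev + 1 := by rw [Fin.val_rev]; omega
  simp only [rwd, stp, mul_sum, sum_satisfiedExponents, hexp, sum_add_distrib, sum_div, mul_ite,
    mul_zero, mul_one, pow_succ']

theorem toColex_satisfiedExponents_lt_of_rnk_lt (h : rnk ρ < rnk ρ') :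
    toColex (satisfiedExponents ρ') < toColex (satisfiedExponents ρ) := by
  rw [rnk_eq_two_pow_sub_sum, rnk_eq_two_pow_sub_sum] at h
  exact (geomSum_lt_geomSum_iff_toColex_lt_toColex le_rfl).1 (lt_of_tsub_lt_tsub_left h)

theorem exists_neg_and_nonneg_of_rnk_lt (h : rnk ρ < rnk ρ') : ∃ i, ρ' i < 0 ∧ 0 ≤ ρ i := by
  by_contra! hnonneg
  have hsub : satisfiedExponents ρ ⊆ satisfiedExponents ρ' := by
    refine map_subset_map.2 fun i hi ↦ ?_
    simp only [mem_filter_univ] at hi ⊢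
    exact not_lt.1 fun hneg ↦ (hnonneg i hneg).not_ge hi
  exact (toColex_satisfiedExponents_lt_of_rnk_lt h).not_ge (Colex.toColex_mono hsub)

theorem mean_lt_mean_add_of_rnk_lt {a : ℝ} (ha : 0 ≤ a) (hle : ∀ i, ρ' i ≤ ρ i + a)
    (h : rnk ρ < rnk ρ') : (∑ i, ρ' i) / N < (∑ i, ρ i) / N + a := by
  obtain ⟨j, hneg, hnonneg⟩ := exists_neg_and_nonneg_of_rnk_lt h
  have hN : (0 : ℝ) < N := Nat.cast_pos.2 j.pos
  have hsum : ∑ i, ρ' i < ∑ i, (ρ i + a) :=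
    sum_lt_sum (fun i _ ↦ hle i) ⟨j, mem_univ j, by linarith⟩
  calc (∑ i, ρ' i) / N < (∑ i, (ρ i + a)) / N := by gcongr
    _ = (∑ i, ρ i) / N + a := by simp [sum_add_distrib, add_div, hN.ne']

end Reward

theorem rank_preserving_reward_general {N : ℕ} {a : ℝ} (ha : 2 ≤ a) {ρ ρ' : Fin N → ℝ}
    (hle : ∀ i, ρ' i ≤ ρ i + a) (h : rnk ρ < rnk ρ') : rwd a ρ' < rwd a ρ := by
  have hnonneg : 0 ≤ a := zero_le_two.trans ha
  have hgap : ∑ k ∈ satisfiedExponents ρ', a ^ k + 1 ≤ ∑ k ∈ satisfiedExponents ρ, a ^ k :=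
    sum_pow_add_one_le_sum_pow_of_toColex_lt ha (toColex_satisfiedExponents_lt_of_rnk_lt h)
  rw [rwd_eq_mul_sum_add, rwd_eq_mul_sum_add]
  calc a * ∑ k ∈ satisfiedExponents ρ', a ^ k + (∑ i, ρ' i) / N
      < a * ∑ k ∈ satisfiedExponents ρ', a ^ k + ((∑ i, ρ i) / N + a) := by
        gcongr
        exact mean_lt_mean_add_of_rnk_lt hnonneg hle h
    _ = a * (∑ k ∈ satisfiedExponents ρ', a ^ k + 1) + (∑ i, ρ i) / N := by ring
    _ ≤ a * ∑ k ∈ satisfiedExponents ρ, a ^ k + (∑ i, ρ i) / N := by gcongr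

/-- the reward `R` is rank-preserving. -/
theorem rank_preserving_reward {N : ℕ} (hN : 1 ≤ N) (a : ℝ) (ha : 2 < a)
    (ρ ρ' : Fin N → ℝ)
    (hρ : ∀ i, ρ i ∈ Set.Icc (-a / 2) (a / 2))
    (hρ' : ∀ i, ρ' i ∈ Set.Icc (-a / 2) (a / 2))
    (h : rnk ρ < rnk ρ') :
    rwd a ρ > rwd a ρ' := by
  exact rank_preserving_reward_general ha.le (fun i ↦ by linarith [(hρ i).1, (hρ' i).2]) h
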